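/- A group G is isomorphic to the group of a Gauss diagram (i.e., there exist a natural number m, a permutation σ of Fin m, a map t : Fin m → Fin m, and signs ε : Fin m → ℤ with ε q = ±1, such that G is isomorphic to the presented group with generators x_i (i : Fin m) and relators (FreeGroup.of (σ q))⁻¹ * (FreeGroup.of (t q))^(−ε q) * (FreeGroup.of q) * (FreeGroup.of (t q))^(ε q) for q : Fin m) if and only if G admits a Wirtinger presentation such that every connected component of the associated graph Γ has Euler characteristic 0 or 1. -/

import Mathlib

/-- The relator set of a Wirtinger presentation on `n` generators with `s` relators. -/
def wirtingerRels (n s : ℕ) (a b : Fin s → Fin n) (w : Fin s → FreeGroup (Fin n)) :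
    Set (FreeGroup (Fin n)) :=
  { r | ∃ q : Fin s,
      r = (FreeGroup.of (a q))⁻¹ * (w q)⁻¹ * FreeGroup.of (b q) * w q }

/-- The edge relation of the graph Γ associated to a Wirtinger presentation. -/
def wirtingerEdge (n s : ℕ) (a b : Fin s → Fin n) (i j : Fin n) : Prop :=
  ∃ q : Fin s, a q = i ∧ b q = j

/-- The relator set of the group of a Gauss diagram with `m` arrows, determined by a
permutation `σ` of the arcs, the arc `t q` carrying the tail of the arrow ending arc `q`,
and signs `ε q = ±1`. -/
def gaussRels (m : ℕ) (σ : Equiv.Perm (Fin m)) (t : Fin m → Fin m) (ε : Fin m → ℤ) :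
    Set (FreeGroup (Fin m)) :=
  { r | ∃ q : Fin m,
      r = (FreeGroup.of (σ q))⁻¹ * (FreeGroup.of (t q)) ^ (-ε q) *
        FreeGroup.of q * (FreeGroup.of (t q)) ^ (ε q) }


theorem gd_presEquiv {α : Type} {R S : Set (FreeGroup α)}
    (h : ∀ (H : Type) [Group H] (φ : α → H),
      (∀ r ∈ R, FreeGroup.lift φ r = 1) ↔ (∀ r ∈ S, FreeGroup.lift φ r = 1)) :
    Nonempty (PresentedGroup R ≃* PresentedGroup S) := by
  have hR : ∀ r ∈ S, FreeGroup.lift (fun x => (PresentedGroup.of x : PresentedGroup R)) r = 1 := by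
    rw [← h]
    intro r hr
    have : FreeGroup.lift (fun x => (PresentedGroup.of x : PresentedGroup R))
        = PresentedGroup.mk R := by ext; simp [PresentedGroup.of]
    rw [this]
    exact PresentedGroup.one_of_mem hr
  have hS : ∀ r ∈ R, FreeGroup.lift (fun x => (PresentedGroup.of x : PresentedGroup S)) r = 1 := by
    rw [h]
    intro r hr
    have : FreeGroup.lift (fun x => (PresentedGroup.of x : PresentedGroup S))
        = PresentedGroup.mk S := by ext; simp [PresentedGroup.of]
    rw [this]
    exact PresentedGroup.one_of_mem hr
  refine ⟨MonoidHom.toMulEquiv (PresentedGroup.toGroup hS) (PresentedGroup.toGroup hR) ?_ ?_⟩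
  · ext x; simp
  · ext x; simp

theorem gd_rel_iff {H : Type*} [Group H] (a w b : H) :
    a⁻¹ * w⁻¹ * b * w = 1 ↔ a = w⁻¹ * b * w := by
  rw [mul_assoc, mul_assoc, inv_mul_eq_one, mul_assoc]

theorem gd_cyc {V : Type} [Fintype V] [DecidableEq V] (r : V → V) (hr : ∀ i, r (r i) = r i) :
    ∃ τ : Equiv.Perm V, (∀ i, r (τ i) = r i) ∧
      ∀ (T : Type) (y : V → T), (∀ i, τ i ≠ r (τ i) → y (τ i) = y i) → ∀ i, y i = y (r i) := by
  have hf : ∀ c : V, ∃ f : Equiv.Perm V, f.IsCycleOn ({i | r i = c} : Finset V) := by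
    intro c
    obtain ⟨f, hf, -⟩ := Finset.exists_cycleOn (Finset.univ.filter (fun i => r i = c))
    exact ⟨f, by simpa using hf⟩
  choose f hf using hf
  have hm : ∀ c i, r i = c → r (f c i) = c := by
    intro c i hi
    have := (hf c).1.mapsTo (x := i) (by simpa using hi)
    simpa using this
  have hinj : Function.Injective (fun i => f (r i) i) := by
    intro i j hij
    simp only at hij
    have h1 : r i = r j := by
      rw [← hm (r i) i rfl, hij, hm (r j) j rfl]
    rw [h1] at hij
    exact (f (r j)).injective hij
  refine ⟨Equiv.ofBijective _ (Finite.injective_iff_bijective.1 hinj), fun i => hm _ i rfl, ?_⟩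
  intro T y hy i
  simp only [Equiv.ofBijective_apply] at hy
  obtain ⟨n, -, hn⟩ := (hf (r i)).exists_pow_eq (a := r i) (b := i) (by simp [hr]) (by simp)
  have key : ∀ n : ℕ, r ((f (r i) ^ n) (r i)) = r i ∧ y ((f (r i) ^ n) (r i)) = y (r i) := by
    intro n
    induction n with
    | zero => simp [hr]
    | succ n ih =>
      have h2 := hm _ _ ih.1
      rw [pow_succ', Equiv.Perm.mul_apply]
      refine ⟨h2, ?_⟩
      have h3 := hy ((f (r i) ^ n) (r i))
      rw [ih.1, h2] at h3
      by_cases h : f (r i) ((f (r i) ^ n) (r i)) = r i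
      · rw [h]
      · rw [h3 h, ih.2]
  have := (key n).2
  rwa [hn] at this

/-- cyclic Wirtinger relators -/
def gdCycRels {V : Type} (τ : V → V) (g : V → FreeGroup V) : Set (FreeGroup V) :=
  Set.range fun i => (FreeGroup.of (τ i))⁻¹ * (g i)⁻¹ * FreeGroup.of i * g i

/-- star form gives cyclic form -/
theorem gd_star_cyc {V : Type} [Fintype V] [DecidableEq V] (r : V → V) (hr : ∀ i, r (r i) = r i)
    (W U : V → FreeGroup V) (hW : ∀ i, W (r i) = 1) :
    ∃ (τ : Equiv.Perm V) (g : V → FreeGroup V), ∀ (H : Type) [Group H] (φ : V → H),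
      ((∀ i, φ i = (FreeGroup.lift φ (W i))⁻¹ * φ (r i) * FreeGroup.lift φ (W i)) ∧
       (∀ i, φ (r i) = (FreeGroup.lift φ (U (r i)))⁻¹ * φ (r i) * FreeGroup.lift φ (U (r i)))) ↔
      ∀ s ∈ gdCycRels τ g, FreeGroup.lift φ s = 1 := by
  obtain ⟨τ, h1, h2⟩ := gd_cyc r hr
  refine ⟨τ, fun i => (W i)⁻¹ * (if τ i = r (τ i) then U (τ i) else W (τ i)), ?_⟩
  intro H _ φ
  simp only [gdCycRels, Set.forall_mem_range, map_mul, map_inv, FreeGroup.lift_apply_of, gd_rel_iff]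
  generalize hL : FreeGroup.lift φ = L
  have hWL : ∀ i, L (W (r i)) = 1 := fun i => by rw [hW, map_one]
  constructor
  · rintro ⟨hs, hu⟩ i
    have e1 : L (W i) * φ i * (L (W i))⁻¹ = φ (r i) := by
      conv_lhs => rw [hs i]
      group
    have e2 : ∀ X : H, ((L (W i))⁻¹ * X)⁻¹ * φ i * ((L (W i))⁻¹ * X) = X⁻¹ * φ (r i) * X := by
      intro X; rw [← e1]; group
    rw [e2]
    split_ifs with h
    · have := hu (τ i)
      rw [← h] at this
      rw [← h1 i, ← h]; exact this
    · rw [← h1 i]; exact hs _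
  · intro hc
    have hy := h2 H (fun i => L (W i) * φ i * (L (W i))⁻¹) (by
      intro i hi
      have := hc i
      rw [if_neg hi] at this
      conv_lhs => rw [this]
      group)
    simp only [hWL] at hy
    have hs : ∀ i, φ i = (L (W i))⁻¹ * φ (r i) * L (W i) := by
      intro i
      have := hy i
      simp only [one_mul, inv_one, mul_one] at this
      rw [← this]; group
    refine ⟨hs, ?_⟩
    intro i
    obtain ⟨j, hj⟩ := τ.surjective (r i)
    have := hc j
    have hjr : r j = r i := by rw [← h1 j, hj, hr]
    have hyj := hy j
    simp only [one_mul, inv_one, mul_one, hjr] at hyj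
    rw [hj, if_pos (hr i).symm] at this
    refine this.trans ?_
    rw [← hyj]
    group

theorem gd_relSat {V H : Type} [Group H] (φ : V → H) (a b : V) (w : FreeGroup V) :
    FreeGroup.lift φ ((FreeGroup.of a)⁻¹ * w⁻¹ * FreeGroup.of b * w) = 1 ↔
      φ a = (FreeGroup.lift φ w)⁻¹ * φ b * FreeGroup.lift φ w := by
  simp only [map_mul, map_inv, FreeGroup.lift_apply_of, gd_rel_iff]

/-- reduction of a Wirtinger presentation to star form -/
theorem gd_star (n s : ℕ) (a b : Fin s → Fin n) (w : Fin s → FreeGroup (Fin n))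
    (hcard : ∀ i : Fin n,
        Nat.card { q : Fin s // Relation.EqvGen (wirtingerEdge n s a b) i (a q) } ≤
          Nat.card { j : Fin n // Relation.EqvGen (wirtingerEdge n s a b) i j }) :
    ∃ (r : Fin n → Fin n) (W U : Fin n → FreeGroup (Fin n)),
      (∀ i, r (r i) = r i) ∧ (∀ i, W (r i) = 1) ∧
      ∀ (H : Type) [Group H] (φ : Fin n → H),
      (∀ x ∈ wirtingerRels n s a b w, FreeGroup.lift φ x = 1) ↔
      ((∀ i, φ i = (FreeGroup.lift φ (W i))⁻¹ * φ (r i) * FreeGroup.lift φ (W i)) ∧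
       (∀ i, φ (r i) = (FreeGroup.lift φ (U (r i)))⁻¹ * φ (r i) * FreeGroup.lift φ (U (r i)))) := by
  classical
  let S : Setoid (Fin n) := Relation.EqvGen.setoid (wirtingerEdge n s a b)
  have hS : ∀ i j, S i j ↔ Relation.EqvGen (wirtingerEdge n s a b) i j := fun i j => Iff.rfl
  let r : Fin n → Fin n := fun i => (Quotient.mk S i).out
  have hrS : ∀ i, S (r i) i := fun i => Quotient.mk_out (s := S) i
  have hr_iff : ∀ i j, Relation.EqvGen (wirtingerEdge n s a b) i j ↔ r i = r j := by
    intro i j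
    constructor
    · intro h
      have : Quotient.mk S i = Quotient.mk S j := Quotient.sound h
      simp only [r, this]
    · intro h
      have h1 := hrS i
      rw [h] at h1
      exact S.trans (S.symm h1) (hrS j)
  have hrr : ∀ i, r (r i) = r i := fun i => (hr_iff _ _).1 (hrS i)
  have hab : ∀ q, r (a q) = r (b q) := fun q =>
    (hr_iff _ _).1 (Relation.EqvGen.rel _ _ ⟨q, rfl, rfl⟩)
  simp only [hr_iff] at hcard
  -- distances
  let Γ := SimpleGraph.fromRel (wirtingerEdge n s a b)
  have hadj : ∀ i j, Γ.Adj i j → ∃ q, (a q = i ∧ b q = j) ∨ (a q = j ∧ b q = i) := by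
    intro i j h
    rw [SimpleGraph.fromRel_adj] at h
    rcases h.2 with ⟨q, h⟩ | ⟨q, h⟩
    · exact ⟨q, Or.inl h⟩
    · exact ⟨q, Or.inr h⟩
  have hreach : ∀ i j, Relation.EqvGen (wirtingerEdge n s a b) i j → Γ.Reachable i j := by
    intro i j h
    induction h with
    | rel x y h =>
      by_cases hxy : x = y
      · rw [hxy]
      · exact SimpleGraph.Adj.reachable ((SimpleGraph.fromRel_adj _ _ _).2 ⟨hxy, Or.inl h⟩)
    | refl x => exact SimpleGraph.Reachable.refl x
    | symm x y _ ih => exact ih.symm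
    | trans x y z _ _ h1 h2 => exact h1.trans h2
  let d : Fin n → ℕ := fun i => Γ.dist i (r i)
  have hpar : ∀ i, ∃ (p : Fin n) (q : Option (Fin s)) (v : FreeGroup (Fin n)), r i ≠ i →
      r p = r i ∧ d p < d i ∧ ∃ q', q = some q' ∧
      ((a q' = i ∧ b q' = p) ∨ (a q' = p ∧ b q' = i)) ∧
      ∀ (H : Type) [Group H] (φ : Fin n → H),
        (φ (a q') = (FreeGroup.lift φ (w q'))⁻¹ * φ (b q') * FreeGroup.lift φ (w q') ↔
          φ i = (FreeGroup.lift φ v)⁻¹ * φ p * FreeGroup.lift φ v) := by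
    intro i
    by_cases hi : r i = i
    · exact ⟨i, none, 1, fun h => absurd hi h⟩
    obtain ⟨W, hW⟩ := (hreach i (r i) ((hr_iff _ _).2 (hrr i).symm)).exists_walk_length_eq_dist
    obtain ⟨p, h, W', hWe⟩ := W.exists_eq_cons_of_ne (fun h => hi h.symm)
    obtain ⟨q, hq⟩ := hadj _ _ h
    have hpr : r p = r i := by
      rcases hq with ⟨h1, h2⟩ | ⟨h1, h2⟩
      · rw [← h1, ← h2, hab]
      · rw [← h1, ← h2, hab]
    have hd : d p < d i := by
      have h1 := SimpleGraph.dist_le W'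
      rw [hWe, SimpleGraph.Walk.length_cons] at hW
      simp only [d, hpr]
      omega
    rcases hq with ⟨h1, h2⟩ | ⟨h1, h2⟩
    · refine ⟨p, some q, w q, fun _ => ⟨hpr, hd, q, rfl, Or.inl ⟨h1, h2⟩, ?_⟩⟩
      intro H _ φ
      rw [h1, h2]
    · refine ⟨p, some q, (w q)⁻¹, fun _ => ⟨hpr, hd, q, rfl, Or.inr ⟨h1, h2⟩, ?_⟩⟩
      intro H _ φ
      rw [h1, h2, map_inv, inv_inv]
      constructor
      · intro h; rw [h]; group
      · intro h; rw [h]; group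
  choose p e v hp using hpar
  -- words to the root
  obtain ⟨W, hW0, hW1⟩ : ∃ W : Fin n → FreeGroup (Fin n),
      (∀ i, r i = i → W i = 1) ∧ (∀ i, r i ≠ i → W i = W (p i) * v i) := by
    let F : (i : Fin n) → ((j : Fin n) → d j < d i → FreeGroup (Fin n)) → FreeGroup (Fin n) :=
      fun i ih => if h : r i = i then 1 else ih (p i) (hp i h).2.1 * v i
    have hwf : WellFounded (fun j i : Fin n => d j < d i) := (measure d).wf
    refine ⟨hwf.fix F, ?_, ?_⟩
    · intro i hi
      rw [hwf.fix_eq]; simp only [F]; rw [dif_pos hi]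
    · intro i hi
      rw [hwf.fix_eq]; simp only [F]; rw [dif_neg hi]
  -- extra edges
  have hextra : ∀ c q q', r (a q) = c → r (a q') = c → (∀ i, r i ≠ i → e i ≠ some q) →
      (∀ i, r i ≠ i → e i ≠ some q') → q = q' := by
    intro c q q' hq hq' h1 h2
    by_contra hne
    have hall : ∀ i, ∃ q0, (r i ≠ i → e i = some q0) ∧ (r i = i → q0 = q) := by
      intro i
      by_cases hi : r i = i
      · exact ⟨q, fun h => absurd hi h, fun _ => rfl⟩
      · obtain ⟨_, _, q0, h, _⟩ := hp i hi
        exact ⟨q0, fun _ => h, fun h => absurd h hi⟩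
    choose E hE1 hE2 using hall
    have hEr : ∀ i, r i = c → r (a (E i)) = c := by
      intro i hi
      by_cases h : r i = i
      · rw [hE2 i h, hq]
      · obtain ⟨h3, _, q0, h4, h5, _⟩ := hp i h
        have : E i = q0 := by
          have := hE1 i h; rw [h4] at this; exact (Option.some.inj this).symm
        rw [this]
        rcases h5 with h5 | h5
        · rw [h5.1, hi]
        · rw [h5.1, h3, hi]
    have hEq' : ∀ i, E i ≠ q' := by
      intro i hi
      by_cases h : r i = i
      · exact hne ((hE2 i h).symm.trans hi)
      · exact h2 i h (hi ▸ hE1 i h)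
    have hEinj : ∀ i j, r i = c → r j = c → E i = E j → i = j := by
      intro i j hi hj hij
      by_cases h : r i = i
      · by_cases h' : r j = j
        · rw [← h, ← h', hi, hj]
        · exact absurd (hE1 j h') (by rw [← hij, hE2 i h]; exact h1 j h')
      · by_cases h' : r j = j
        · exact absurd (hE1 i h) (by rw [hij, hE2 j h']; exact h1 i h)
        · obtain ⟨_, hd1, q1, h4, h5, _⟩ := hp i h
          obtain ⟨_, hd2, q2, h4', h5', _⟩ := hp j h'
          have e1 := hE1 i h
          have e2 := hE1 j h'
          rw [h4] at e1
          rw [h4'] at e2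
          have e1 := Option.some.inj e1
          have e2 := Option.some.inj e2
          have e3 : q1 = q2 := by rw [e1, e2, hij]
          subst e3
          rcases h5 with ⟨x1, x2⟩ | ⟨x1, x2⟩ <;> rcases h5' with ⟨y1, y2⟩ | ⟨y1, y2⟩
          · exact x1.symm.trans y1
          · rw [← x2, y2] at hd1
            rw [← y1, x1] at hd2
            omega
          · rw [← x1, y1] at hd1
            rw [← y2, x2] at hd2
            omega
          · exact x2.symm.trans y2
    have hc := hcard c
    have hcc : r c = c := by rw [← hq, hrr]
    rw [hcc] at hc
    let Φ : Option { j : Fin n // c = r j } → { q : Fin s // c = r (a q) } := fun o =>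
      match o with
      | none => ⟨q', hq'.symm⟩
      | some j => ⟨E j.1, (hEr j.1 j.2.symm).symm⟩
    have hΦ : Function.Injective Φ := by
      intro x y hxy
      rcases x with _ | x <;> rcases y with _ | y
      · rfl
      · exact absurd (congrArg Subtype.val hxy).symm (hEq' _)
      · exact absurd (congrArg Subtype.val hxy) (hEq' _)
      · exact congrArg some (Subtype.ext (hEinj _ _ x.2.symm y.2.symm (congrArg Subtype.val hxy)))
    have := Nat.card_le_card_of_injective Φ hΦ
    rw [Finite.card_option] at this
    omega
  have hU : ∀ c, ∃ u : FreeGroup (Fin n),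
      (∀ q, r (a q) = c → (∀ i, r i ≠ i → e i ≠ some q) → u = W (b q) * w q * (W (a q))⁻¹) ∧
      ((¬ ∃ q, r (a q) = c ∧ (∀ i, r i ≠ i → e i ≠ some q)) → u = 1) := by
    intro c
    by_cases h : ∃ q, r (a q) = c ∧ (∀ i, r i ≠ i → e i ≠ some q)
    · obtain ⟨q, h1, h2⟩ := h
      refine ⟨W (b q) * w q * (W (a q))⁻¹, ?_, fun h => absurd ⟨q, h1, h2⟩ h⟩
      intro q' h1' h2'
      rw [hextra c q q' h1 h1' h2 h2']
    · exact ⟨1, fun q h1 h2 => absurd ⟨q, h1, h2⟩ h, fun _ => rfl⟩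
  choose U hU1 hU2 using hU
  refine ⟨r, W, U, hrr, fun i => hW0 _ (hrr i), ?_⟩
  intro H _ φ
  have hrel : (∀ x ∈ wirtingerRels n s a b w, FreeGroup.lift φ x = 1) ↔
      ∀ q, φ (a q) = (FreeGroup.lift φ (w q))⁻¹ * φ (b q) * FreeGroup.lift φ (w q) := by
    simp only [wirtingerRels, Set.mem_ofPred_eq, forall_exists_index]
    constructor
    · intro h q
      exact (gd_relSat _ _ _ _).1 (h _ q rfl)
    · rintro h x q rfl
      exact (gd_relSat _ _ _ _).2 (h q)
  rw [hrel]
  generalize hL : FreeGroup.lift φ = L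
  have hext : ∀ q, (∀ i, φ i = (L (W i))⁻¹ * φ (r i) * L (W i)) →
      r (a q) = r (a q) → (∀ i, r i ≠ i → e i ≠ some q) →
      (φ (a q) = (L (w q))⁻¹ * φ (b q) * L (w q) ↔
      φ (r (a q)) = (L (U (r (a q))))⁻¹ * φ (r (a q)) * L (U (r (a q)))) := by
    intro q hs _ h2
    rw [hU1 _ q rfl h2, map_mul, map_mul, map_inv]
    have h3 := hs (a q)
    have h4 := hs (b q)
    rw [← hab q] at h4
    rw [h3, h4]
    generalize L (W (a q)) = A
    generalize L (W (b q)) = B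
    generalize φ (r (a q)) = x
    generalize L (w q) = z
    constructor
    · intro h
      calc x = A * (A⁻¹ * x * A) * A⁻¹ := by group
        _ = _ := by rw [h]; group
    · intro h
      calc A⁻¹ * x * A = A⁻¹ * ((B * z * A⁻¹)⁻¹ * x * (B * z * A⁻¹)) * A := by rw [← h]
        _ = _ := by group
  constructor
  · intro hall
    have hs : ∀ k i, d i ≤ k → φ i = (L (W i))⁻¹ * φ (r i) * L (W i) := by
      intro k
      induction k with
      | zero =>
        intro i hi
        by_cases h : r i = i
        · rw [hW0 i h, h]; simp
        · have := (hp i h).2.1; omega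
      | succ k ih =>
        intro i hi
        by_cases h : r i = i
        · rw [hW0 i h, h]; simp
        · obtain ⟨h3, h6, q0, h4, h5, h7⟩ := hp i h
          have := (h7 H φ).1 (by rw [hL]; exact hall q0)
          rw [this, hL, hW1 i h, ih (p i) (by omega), h3, map_mul]
          group
    have hs := fun i => hs _ i le_rfl
    refine ⟨hs, ?_⟩
    intro i
    by_cases h : ∃ q, r (a q) = r i ∧ (∀ i, r i ≠ i → e i ≠ some q)
    · obtain ⟨q, h1, h2⟩ := h
      have := (hext q hs rfl h2).1 (hall q)
      rwa [h1] at this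
    · rw [hU2 _ h]; simp
  · rintro ⟨hs, hu⟩ q
    by_cases h : ∀ i, r i ≠ i → e i ≠ some q
    · exact (hext q hs rfl h).2 (hu (a q))
    · push Not at h
      obtain ⟨i, hi, hq⟩ := h
      obtain ⟨h3, h6, q0, h4, h5, h7⟩ := hp i hi
      have : q0 = q := Option.some.inj (h4.symm.trans hq)
      subst this
      have h8 := (h7 H φ).2 (by
        rw [hL, hs i, hs (p i), h3, hW1 i hi, map_mul]; group)
      rwa [hL] at h8

/-- Gauss relators over an arbitrary index type -/
def gdGRels {K : Type} (σ : K → K) (t : K → K) (ε : K → ℤ) : Set (FreeGroup K) :=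
  Set.range fun q => (FreeGroup.of (σ q))⁻¹ * (FreeGroup.of (t q)) ^ (-ε q) *
        FreeGroup.of q * (FreeGroup.of (t q)) ^ (ε q)

theorem gd_toFin {K : Type} [Fintype K] (σ : Equiv.Perm K) (t : K → K) (ε : K → ℤ)
    (hε : ∀ q, ε q = 1 ∨ ε q = -1) :
    ∃ (m : ℕ) (σ' : Equiv.Perm (Fin m)) (t' : Fin m → Fin m) (ε' : Fin m → ℤ),
      (∀ q, ε' q = 1 ∨ ε' q = -1) ∧
      Nonempty (PresentedGroup (gdGRels σ t ε) ≃* PresentedGroup (gaussRels m σ' t' ε')) := by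
  let f := Fintype.equivFin K
  refine ⟨_, f.permCongr σ, fun q => f (t (f.symm q)), fun q => ε (f.symm q),
    fun q => hε _, ?_⟩
  have : gaussRels _ (f.permCongr σ) (fun q => f (t (f.symm q))) (fun q => ε (f.symm q)) =
      FreeGroup.freeGroupCongr f '' gdGRels σ t ε := by
    ext x
    simp only [gaussRels, gdGRels, Set.mem_ofPred_eq, Set.mem_image, Set.exists_range_iff]
    constructor
    · rintro ⟨q, rfl⟩
      exact ⟨f.symm q, by simp [FreeGroup.freeGroupCongr]⟩
    · rintro ⟨q, rfl⟩
      exact ⟨f q, by simp [FreeGroup.freeGroupCongr]⟩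
  rw [this]
  exact ⟨PresentedGroup.equivPresentedGroup _ f⟩

/-- value of a letter -/
def gdLet {V H : Type} [Group H] (x : V → H) (l : V × Bool) : H := cond l.2 (x l.1) (x l.1)⁻¹

/-- the next arc -/
def gdNext {V : Type} (τ : V → V) (L : V → List (V × Bool)) (hL : ∀ i, 0 < (L i).length) :
    (Σ i, Fin (L i).length) → Σ i, Fin (L i).length := fun k =>
  if h : k.2.1 + 1 < (L k.1).length then ⟨k.1, ⟨k.2.1 + 1, h⟩⟩ else ⟨τ k.1, ⟨0, hL _⟩⟩

theorem gd_next_surj {V : Type} (τ : Equiv.Perm V) (L : V → List (V × Bool))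
    (hL : ∀ i, 0 < (L i).length) : Function.Surjective (gdNext τ L hL) := by
  rintro ⟨i, ⟨j, hj⟩⟩
  cases j with
  | zero =>
    have hp := hL (τ.symm i)
    refine ⟨⟨τ.symm i, ⟨(L (τ.symm i)).length - 1, by omega⟩⟩, ?_⟩
    unfold gdNext
    rw [dif_neg (by simp only; omega)]
    have : ∀ k, k = i → (⟨k, ⟨0, hL k⟩⟩ : Σ i, Fin (L i).length) = ⟨i, ⟨0, hj⟩⟩ := by
      rintro k rfl; rfl
    exact this _ (by simp)
  | succ j =>
    refine ⟨⟨i, ⟨j, by omega⟩⟩, ?_⟩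
    unfold gdNext
    rw [dif_pos hj]

/-- Expanding words into letters. -/
theorem gd_expand {V : Type} [Fintype V] (τ : Equiv.Perm V) (L : V → List (V × Bool))
    (hL : ∀ i, 0 < (L i).length) :
    ∃ (K : Type) (_ : Fintype K) (σ : Equiv.Perm K) (t : K → K) (ε : K → ℤ),
      (∀ q, ε q = 1 ∨ ε q = -1) ∧
      Nonempty (PresentedGroup (gdCycRels τ fun i => FreeGroup.mk (L i)) ≃*
        PresentedGroup (gdGRels σ t ε)) := by
  classical
  let K := Σ i, Fin (L i).length
  let σ : Equiv.Perm K := Equiv.ofBijective (gdNext τ L hL)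
    (Finite.surjective_iff_bijective.1 (gd_next_surj τ L hL))
  let z0 : V → K := fun i => ⟨i, ⟨0, hL i⟩⟩
  let letter : K → V × Bool := fun k => (L k.1)[k.2]
  let t : K → K := fun k => z0 (letter k).1
  let ε : K → ℤ := fun k => if (letter k).2 then 1 else -1
  refine ⟨K, inferInstance, σ, t, ε, ?_, ?_⟩
  · intro q; simp only [ε]; split_ifs <;> simp
  -- semantic form of the Gauss relators
  have hG : ∀ (H : Type) [Group H] (z : K → H),
      (∀ s ∈ gdGRels σ t ε, FreeGroup.lift z s = 1) ↔
      ∀ k, z (σ k) = (gdLet (fun i => z (z0 i)) (letter k))⁻¹ * z k *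
        gdLet (fun i => z (z0 i)) (letter k) := by
    intro H _ z
    simp only [gdGRels, Set.forall_mem_range, map_mul, map_inv, FreeGroup.lift_apply_of, map_zpow,
      zpow_neg, gd_rel_iff]
    refine forall_congr' fun k => ?_
    have : z (t k) ^ ε k = gdLet (fun i => z (z0 i)) (letter k) := by
      simp only [gdLet, t, ε]
      cases (letter k).2 <;> simp
    rw [this]
  have hC : ∀ (H : Type) [Group H] (x : V → H),
      (∀ s ∈ gdCycRels τ fun i => FreeGroup.mk (L i), FreeGroup.lift x s = 1) ↔
      ∀ i, x (τ i) = (((L i).map (gdLet x)).prod)⁻¹ * x i * ((L i).map (gdLet x)).prod := by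
    intro H _ x
    simp only [gdCycRels, Set.forall_mem_range, gd_relSat]
    refine forall_congr' fun i => ?_
    rw [FreeGroup.lift_mk]
    rfl
  let P := PresentedGroup (gdCycRels τ fun i => FreeGroup.mk (L i))
  let Q := PresentedGroup (gdGRels σ t ε)
  let x : V → P := PresentedGroup.of
  let z : K → Q := PresentedGroup.of
  have hx : ∀ i, x (τ i) = (((L i).map (gdLet x)).prod)⁻¹ * x i * ((L i).map (gdLet x)).prod := by
    rw [← hC]
    intro s hs
    have : FreeGroup.lift x = PresentedGroup.mk _ := by ext; simp [x, PresentedGroup.of]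
    rw [this]
    exact PresentedGroup.one_of_mem hs
  have hz : ∀ k, z (σ k) = (gdLet (fun i => z (z0 i)) (letter k))⁻¹ * z k *
        gdLet (fun i => z (z0 i)) (letter k) := by
    rw [← hG]
    intro s hs
    have : FreeGroup.lift z = PresentedGroup.mk _ := by ext; simp [z, PresentedGroup.of]
    rw [this]
    exact PresentedGroup.one_of_mem hs
  -- prefix products
  let pre : (H : Type) → [Group H] → (V → H) → V → ℕ → H :=
    fun H _ y i j => (((L i).take j).map (gdLet y)).prod
  have pre_succ : ∀ (H : Type) [Group H] (y : V → H) (k : K),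
      pre H y k.1 (k.2.1 + 1) = pre H y k.1 k.2.1 * gdLet y (letter k) := by
    intro H _ y k
    simp only [pre]
    rw [List.take_succ_eq_append_getElem k.2.2, List.map_append, List.prod_append]
    simp [letter]
  let zx : K → P := fun k => (pre P x k.1 k.2.1)⁻¹ * x k.1 * pre P x k.1 k.2.1
  have zx0 : ∀ i, zx (z0 i) = x i := by intro i; simp [zx, z0, pre]
  have hzx : ∀ s ∈ gdGRels σ t ε, FreeGroup.lift zx s = 1 := by
    rw [hG]
    intro k
    simp only [zx0]
    have h1 : zx (σ k) = (pre P x k.1 (k.2.1 + 1))⁻¹ * x k.1 * pre P x k.1 (k.2.1 + 1) := by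
      change zx (gdNext τ L hL k) = _
      unfold gdNext
      split_ifs with h
      · rfl
      · have h2 : k.2.1 + 1 = (L k.1).length := by have := k.2.2; omega
        rw [h2]
        change zx (z0 _) = _
        rw [zx0, hx]
        simp only [pre, List.take_length]
    rw [h1, pre_succ]
    simp only [zx]
    group
  have hpre : ∀ i (j : ℕ) (hj : j < (L i).length),
      z ⟨i, ⟨j, hj⟩⟩ = (pre Q (fun i => z (z0 i)) i j)⁻¹ * z (z0 i) *
        pre Q (fun i => z (z0 i)) i j := by
    intro i j
    induction j with
    | zero => intro hj; simp [pre, z0]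
    | succ j ih =>
      intro hj
      have h1 := hz ⟨i, ⟨j, by omega⟩⟩
      have h2 : σ ⟨i, ⟨j, by omega⟩⟩ = ⟨i, ⟨j + 1, hj⟩⟩ := by
        change gdNext τ L hL _ = _
        unfold gdNext
        rw [dif_pos hj]
      rw [h2, ih] at h1
      rw [h1]
      have h3 := pre_succ Q (fun i => z (z0 i)) ⟨i, ⟨j, by omega⟩⟩
      simp only at h3
      rw [h3]
      group
  have hxz : ∀ s ∈ gdCycRels τ fun i => FreeGroup.mk (L i),
      FreeGroup.lift (fun i => z (z0 i)) s = 1 := by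
    rw [hC]
    intro i
    have hl := hL i
    let k : K := ⟨i, ⟨(L i).length - 1, by omega⟩⟩
    have h1 := hz k
    have h2 : σ k = z0 (τ i) := by
      change gdNext τ L hL _ = _
      unfold gdNext
      rw [dif_neg (by simp only [k]; omega)]
    have h3 := pre_succ Q (fun i => z (z0 i)) k
    have h4 : pre Q (fun i => z (z0 i)) k.1 (k.2.1 + 1) =
        ((L i).map (gdLet (fun i => z (z0 i)))).prod := by
      have : k.2.1 + 1 = (L i).length := by simp only [k]; omega
      rw [this]; simp only [pre, k, List.take_length]
    rw [← h4, h3, ← h2, h1, hpre i _ (by omega : (L i).length - 1 < (L i).length)]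
    simp only [k]
    group
  have hlift : ∀ (f : P →* Q), (∀ i, f (x i) = z (z0 i)) → ∀ i j,
      f (pre P x i j) = pre Q (fun i => z (z0 i)) i j := by
    intro f hf i j
    simp only [pre]
    rw [map_list_prod, List.map_map]
    congr 2
    funext l
    simp only [Function.comp, gdLet]
    cases l.2 <;> simp [hf]
  refine ⟨MonoidHom.toMulEquiv (PresentedGroup.toGroup hxz) (PresentedGroup.toGroup hzx) ?_ ?_⟩
  · ext i
    simp only [MonoidHom.comp_apply, PresentedGroup.toGroup.of, z, MonoidHom.id_apply]
    exact zx0 i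
  · ext k
    simp only [MonoidHom.comp_apply, PresentedGroup.toGroup.of, MonoidHom.id_apply]
    have hf : ∀ i, PresentedGroup.toGroup hxz (x i) = z (z0 i) := fun i =>
      PresentedGroup.toGroup.of hxz
    simp only [zx]
    rw [map_mul, map_mul, map_inv, hf, hlift _ hf]
    exact (hpre k.1 k.2.1 k.2.2).symm

theorem gauss_diagram_group_iff_wirtinger
    (G : Type*) [Group G] :
    (∃ (m : ℕ) (σ : Equiv.Perm (Fin m)) (t : Fin m → Fin m) (ε : Fin m → ℤ),
      (∀ q : Fin m, ε q = 1 ∨ ε q = -1) ∧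
      Nonempty (G ≃* PresentedGroup (gaussRels m σ t ε))) ↔
    (∃ (n s : ℕ) (a b : Fin s → Fin n) (w : Fin s → FreeGroup (Fin n)),
      (∀ i : Fin n,
        Nat.card { q : Fin s // Relation.EqvGen (wirtingerEdge n s a b) i (a q) } ≤
          Nat.card { j : Fin n // Relation.EqvGen (wirtingerEdge n s a b) i j }) ∧
      Nonempty (G ≃* PresentedGroup (wirtingerRels n s a b w))) := by
  constructor
  · rintro ⟨m, σ, t, ε, -, ⟨e⟩⟩
    refine ⟨m, m, σ, id, fun q => FreeGroup.of (t q) ^ ε q, ?_, ?_⟩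
    · intro i
      refine Nat.card_le_card_of_injective (fun q => ⟨σ q.1, q.2⟩) ?_
      intro x y h
      exact Subtype.ext (σ.injective (congrArg Subtype.val h))
    · have : wirtingerRels m m σ id (fun q => FreeGroup.of (t q) ^ ε q) = gaussRels m σ t ε := by
        simp only [wirtingerRels, gaussRels, zpow_neg, id]
      rw [this]
      exact ⟨e⟩
  · rintro ⟨n, s, a, b, w, hcard, ⟨e⟩⟩
    obtain ⟨r, W, U, hrr, hW, hstar⟩ := gd_star n s a b w hcard
    obtain ⟨τ, g, hg⟩ := gd_star_cyc r hrr W U hW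
    let L : Fin n → List (Fin n × Bool) := fun i => (i, true) :: (g i).toWord
    obtain ⟨e1⟩ := gd_presEquiv (R := wirtingerRels n s a b w)
      (S := gdCycRels τ fun i => FreeGroup.mk (L i)) (by
        intro H _ φ
        rw [hstar, hg]
        simp only [gdCycRels, Set.forall_mem_range, gd_relSat]
        refine forall_congr' fun i => ?_
        have : FreeGroup.mk (L i) = FreeGroup.of i * g i := by
          conv_rhs => rw [← FreeGroup.mk_toWord (x := g i), FreeGroup.of, FreeGroup.mul_mk]
          rfl
        rw [this, map_mul, FreeGroup.lift_apply_of]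
        have : ∀ y : H, (φ i * y)⁻¹ * φ i * (φ i * y) = y⁻¹ * φ i * y := by intro y; group
        rw [this])
    obtain ⟨K, _, σ, t, ε, hε, ⟨e2⟩⟩ := gd_expand τ L (fun i => by simp [L])
    obtain ⟨m, σ', t', ε', hε', ⟨e3⟩⟩ := gd_toFin σ t ε hε
    exact ⟨m, σ', t', ε', hε', ⟨e.trans (e1.trans (e2.trans e3))⟩⟩
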